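/- Let t ≥ 2. Let A'' be the (t−1)×(t+c−2) matrix obtained from A by deleting its first row and first column, and let C be the t×(t+c−2) matrix obtained from A by deleting its first column. Then I(A) = I(C) + x_1^{u_{1,1}}·I(A'') as ideals of R, where x_1^{u_{1,1}}·I(A'') denotes the ideal generated by the products of x_1^{u_{1,1}} with the elements of I(A''). -/

import Mathlib

open MvPolynomial Matrix

/-- The ideal generated by the maximal (`p × p`) minors of a `p × q` matrix
(determinants of the square submatrices obtained by choosing `p` of the `q` columns). -/
noncomputable def maximalMinors {S : Type*} [CommRing S] {p q : ℕ}
    (M : Matrix (Fin p) (Fin q) S) : Ideal S :=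
  Ideal.span {d : S | ∃ g : Fin p ↪ Fin q, d = (M.submatrix id g).det}

/-!
If the only nonzero entry of column `j` is `a`, in row `i`, then a maximal minor that uses column
`j` is, by Laplace expansion along it, `± a` times a maximal minor of the matrix without row `i`
and column `j`, and every maximal minor of that matrix arises so. The maximal minors that avoid
column `j` are those of the matrix without it. For the band matrix `A`, `i = j = 0` and
`a = x_1^{u_{1,1}}`.
-/

section

variable {S : Type*} [CommRing S] {p q r n m : ℕ}

theorem maximalMinors_le_iff {M : Matrix (Fin p) (Fin q) S} {I : Ideal S} :
    maximalMinors M ≤ I ↔ ∀ g : Fin p ↪ Fin q, (M.submatrix id g).det ∈ I := by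
  refine Ideal.span_le.trans ⟨fun h g => h ⟨g, rfl⟩, ?_⟩
  rintro h _ ⟨g, rfl⟩
  exact h g

theorem det_submatrix_mem_maximalMinors (M : Matrix (Fin p) (Fin q) S) (g : Fin p → Fin q) :
    (M.submatrix id g).det ∈ maximalMinors M := by
  by_cases hg : Function.Injective g
  · exact maximalMinors_le_iff.1 le_rfl ⟨g, hg⟩
  · obtain ⟨a, b, hab, hne⟩ := Function.not_injective_iff.1 hg
    rw [det_zero_of_column_eq hne fun i => congrArg (M i) hab]
    exact zero_mem _

theorem maximalMinors_submatrix_id_le (M : Matrix (Fin p) (Fin q) S) (e : Fin r → Fin q) :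
    maximalMinors (M.submatrix id e) ≤ maximalMinors M :=
  maximalMinors_le_iff.2 fun g => det_submatrix_mem_maximalMinors M (e ∘ g)

theorem det_eq_of_forall_ne_eq_zero (M : Matrix (Fin (n + 1)) (Fin (n + 1)) S) {i j : Fin (n + 1)}
    (hcol : ∀ i' ≠ i, M i' j = 0) :
    M.det = (-1) ^ (i + j : ℕ) * (M i j * (M.submatrix i.succAbove j.succAbove).det) := by
  rw [det_succ_column M j, Finset.sum_eq_single i (fun i' _ hi' => by simp [hcol i' hi'])
    (by simp), mul_assoc]

variable {A : Matrix (Fin (n + 1)) (Fin (m + 1)) S} {i : Fin (n + 1)} {j : Fin (m + 1)}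

theorem maximalMinors_le_of_forall_ne_eq_zero (hcol : ∀ i' ≠ i, A i' j = 0) :
    maximalMinors A ≤ maximalMinors (A.submatrix id j.succAbove) +
      Ideal.span {A i j} * maximalMinors (A.submatrix i.succAbove j.succAbove) := by
  refine maximalMinors_le_iff.2 fun g => ?_
  by_cases hg : ∃ a, g a = j
  · obtain ⟨a, rfl⟩ := hg
    have hne (b : Fin n) : g (a.succAbove b) ≠ g a := g.injective.ne (a.succAbove_ne b)
    choose g' hg' using fun b => Fin.exists_succAbove_eq (hne b)
    have hminor : (A.submatrix id g).submatrix i.succAbove a.succAbove =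
        (A.submatrix i.succAbove (g a).succAbove).submatrix id g' := by
      ext r b
      simp only [submatrix_apply, id, hg']
    rw [det_eq_of_forall_ne_eq_zero (A.submatrix id g) (j := a) hcol, hminor]
    exact Ideal.mem_sup_right <| Ideal.mul_mem_left _ _ <| Ideal.mul_mem_mul
      (Ideal.mem_span_singleton_self _) (det_submatrix_mem_maximalMinors _ g')
  · choose g' hg' using fun a => Fin.exists_succAbove_eq (not_exists.1 hg a)
    have hminor : A.submatrix id g = (A.submatrix id j.succAbove).submatrix id g' := by
      ext r b
      simp only [submatrix_apply, id, hg']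
    rw [hminor]
    exact Ideal.mem_sup_left (det_submatrix_mem_maximalMinors _ g')

theorem span_singleton_mul_maximalMinors_le_of_forall_ne_eq_zero (hcol : ∀ i' ≠ i, A i' j = 0) :
    Ideal.span {A i j} * maximalMinors (A.submatrix i.succAbove j.succAbove) ≤
      maximalMinors A := by
  suffices h : maximalMinors (A.submatrix i.succAbove j.succAbove) ≤
      Submodule.comap (LinearMap.mulLeft S (A i j)) (maximalMinors A) from
    Ideal.span_singleton_mul_le_iff.2 h
  refine maximalMinors_le_iff.2 fun g => ?_
  let g' : Fin (n + 1) → Fin (m + 1) := Fin.cons j (j.succAbove ∘ g)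
  have hdet : (A.submatrix id g').det = (-1) ^ (i + (0 : Fin (n + 1)) : ℕ) *
      (A i j * ((A.submatrix i.succAbove j.succAbove).submatrix id g).det) :=
    det_eq_of_forall_ne_eq_zero (A.submatrix id g') (j := 0) hcol
  have hmem := det_submatrix_mem_maximalMinors A g'
  rwa [hdet, Ideal.unit_mul_mem_iff_mem _ (isUnit_neg_one.pow _)] at hmem

theorem maximalMinors_eq_of_forall_ne_eq_zero (hcol : ∀ i' ≠ i, A i' j = 0) :
    maximalMinors A = maximalMinors (A.submatrix id j.succAbove) +
      Ideal.span {A i j} * maximalMinors (A.submatrix i.succAbove j.succAbove) :=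
  le_antisymm (maximalMinors_le_of_forall_ne_eq_zero hcol) <|
    sup_le (maximalMinors_submatrix_id_le A _)
      (span_singleton_mul_maximalMinors_le_of_forall_ne_eq_zero hcol)

end

theorem stmt_1_general {S : Type*} [CommRing S] {p q : ℕ} (hp : 0 < p) (hq : 0 < q)
    (A : Matrix (Fin p) (Fin q) S) (hcol : ∀ i : Fin p, 0 < i.1 → A i ⟨0, hq⟩ = 0) :
    maximalMinors A =
      maximalMinors (A.submatrix id
        (fun j : Fin (q - 1) => (⟨j.1 + 1, by omega⟩ : Fin q))) +
      Ideal.span {A ⟨0, hp⟩ ⟨0, hq⟩} * maximalMinors (A.submatrix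
        (fun i : Fin (p - 1) => (⟨i.1 + 1, by omega⟩ : Fin p))
        (fun j : Fin (q - 1) => (⟨j.1 + 1, by omega⟩ : Fin q))) := by
  obtain ⟨n, rfl⟩ := Nat.exists_eq_add_one.2 hp
  obtain ⟨m, rfl⟩ := Nat.exists_eq_add_one.2 hq
  have hcol' (i : Fin (n + 1)) (hi : i ≠ 0) : A i 0 = 0 := hcol i (Fin.pos_iff_ne_zero.2 hi)
  have h := maximalMinors_eq_of_forall_ne_eq_zero hcol'
  simp only [Fin.succAbove_zero] at h
  exact h

/-- Let `t ≥ 2`.  Deleting the first row and column of `A` gives `A''`, deleting the first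
column gives `C`; then `I(A) = I(C) + x_1^{u_{1,1}} · I(A'')`. -/
theorem stmt_1 {k : Type*} [Field k] (c t : ℕ) (hc : 1 ≤ c) (ht : 2 ≤ t)
    (u : Fin (t + c - 1) → Fin t → ℕ)
    (hupos : ∀ j i, 0 < u j i)
    (hurow : ∀ (j j' : Fin (t + c - 1)) (i : Fin t), j ≤ j' → u j i ≤ u j' i)
    (hucol : ∀ (j : Fin (t + c - 1)) (i i' : Fin t), i ≤ i' → u j i ≤ u j i')
    (A : Matrix (Fin t) (Fin (t + c - 1)) (MvPolynomial (Fin c) k))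
    (hA : ∀ i j, A i j =
      if h : i.1 ≤ j.1 ∧ j.1 < i.1 + c
      then X (⟨j.1 - i.1, by omega⟩ : Fin c) ^ u j i else 0)
    (A'' : Matrix (Fin (t - 1)) (Fin (t + c - 2)) (MvPolynomial (Fin c) k))
    (hA'' : A'' = A.submatrix
      (fun i : Fin (t - 1) => (⟨i.1 + 1, by have := i.isLt; omega⟩ : Fin t))
      (fun j : Fin (t + c - 2) => (⟨j.1 + 1, by have := j.isLt; omega⟩ : Fin (t + c - 1))))
    (C : Matrix (Fin t) (Fin (t + c - 2)) (MvPolynomial (Fin c) k))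
    (hC : C = A.submatrix id
      (fun j : Fin (t + c - 2) => (⟨j.1 + 1, by have := j.isLt; omega⟩ : Fin (t + c - 1)))) :
    maximalMinors A =
      maximalMinors C +
        Ideal.span {X (⟨0, by omega⟩ : Fin c) ^
            u (⟨0, by omega⟩ : Fin (t + c - 1)) (⟨0, by omega⟩ : Fin t)} *
          maximalMinors A'' := by
  have hcorner : A ⟨0, by omega⟩ ⟨0, by omega⟩ = X ⟨0, hc⟩ ^ u ⟨0, by omega⟩ ⟨0, by omega⟩ :=
    (hA _ _).trans (dif_pos ⟨le_rfl, by lia⟩)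
  rw [hC, hA'', ← hcorner]
  exact stmt_1_general _ _ A fun i hi => (hA i _).trans (dif_neg fun h => hi.not_ge h.1)
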